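/- arXiv:1808.06850 — 6 statements merged into one kernel-verified Lean document; each statement's English description precedes it below -/
import Mathlib

section
/- There exists a universal constant C > 0 such that for every s ≥ 2, every continuously differentiable function u defined on a neighborhood of the hyperboloid arc H_s = {(√(s²+x²), x) : |x| ≤ (s²−1)/2} in ℝ², and every x with |x| ≤ (s²−1)/2, one has √(s²+x²) · u(√(s²+x²), x)² ≤ C ( ∫_{−(s²−1)/2}^{(s²−1)/2} u(√(s²+z²), z)² dz + ∫_{−(s²−1)/2}^{(s²−1)/2} (Lu)(√(s²+z²), z)² dz ). -/
open MeasureTheory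

/-- Partial derivative in `t` of a function `u(t,x)`. -/
noncomputable def Dt (u : ℝ → ℝ → ℝ) : ℝ → ℝ → ℝ := fun t x => deriv (fun τ => u τ x) t

/-- Partial derivative in `x` of a function `u(t,x)`. -/
noncomputable def Dx (u : ℝ → ℝ → ℝ) : ℝ → ℝ → ℝ := fun t x => deriv (fun y => u t y) x

/-- The Lorentz boost `L u = x ∂_t u + t ∂_x u`. -/
noncomputable def Lop (u : ℝ → ℝ → ℝ) : ℝ → ℝ → ℝ := fun t x => x * Dt u t x + t * Dx u t x

/-- The 1+1-dimensional wave operator `□u = ∂_t∂_t u − ∂_x∂_x u`. -/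
noncomputable def Box (u : ℝ → ℝ → ℝ) : ℝ → ℝ → ℝ := fun t x => Dt (Dt u) t x - Dx (Dx u) t x

/-- The null derivative `∂̃₁ u = (x/|x|) ∂_t u + ∂_x u` (for `x ≠ 0`). -/
noncomputable def Nd (u : ℝ → ℝ → ℝ) : ℝ → ℝ → ℝ := fun t x => (x/|x|) * Dt u t x + Dx u t x

/-!
Along the hyperbola, put `τ z = √(s² + z²)` and `v z = u (τ z, z)`. The boost is tangent to the
curve, so `v' = Lu / τ`. To bound `v x`, integrate the derivative of `(z - c) v(z)²` from `c` to
`x`, where `|x - c| = min (τ x) (2R) / 2` and `[-R, R]` is the range of `z`. The cross term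
`2 (z - c) v v'` is at most `v² + (Lu)²` because `|z - c| ≤ τ z` between `c` and `x`, which holds
as long as `|x - c| ≤ τ x / 2` since `τ` is `1`-Lipschitz. For `s ≥ 2` and `R = (s² - 1) / 2` the
minimum is `τ x`.
-/

lemma sub_mul_sq_eq_integral {v v' : ℝ → ℝ} {c x : ℝ}
    (hv : ∀ z ∈ Set.uIcc c x, HasDerivAt v (v' z) z) (hv' : ContinuousOn v' (Set.uIcc c x)) :
    (x - c) * v x ^ 2 = ∫ z in c..x, (v z ^ 2 + (z - c) * (2 * v z * v' z)) := by
  have hv_cont : ContinuousOn v (Set.uIcc c x) := HasDerivAt.continuousOn hv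
  have hderiv : ∀ z ∈ Set.uIcc c x, HasDerivAt (fun y => (y - c) * v y ^ 2)
      (v z ^ 2 + (z - c) * (2 * v z * v' z)) z := fun z hz =>
    (((hasDerivAt_id z).sub_const c).mul ((hv z hz).pow 2)).congr_deriv (by simp)
  rw [intervalIntegral.integral_eq_sub_of_hasDerivAt hderiv
    (ContinuousOn.intervalIntegrable (by fun_prop))]
  ring

lemma abs_sub_mul_sq_le_abs_integral {v v' g : ℝ → ℝ} {c x : ℝ}
    (hv : ∀ z ∈ Set.uIcc c x, HasDerivAt v (v' z) z) (hv' : ContinuousOn v' (Set.uIcc c x))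
    (hg : ContinuousOn g (Set.uIcc c x)) (hle : ∀ z ∈ Set.uIcc c x, |(z - c) * v' z| ≤ |g z|) :
    |x - c| * v x ^ 2 ≤ |∫ z in c..x, (2 * v z ^ 2 + g z ^ 2)| := by
  have hv_cont : ContinuousOn v (Set.uIcc c x) := HasDerivAt.continuousOn hv
  have hbound : ∀ z ∈ Set.uIcc c x,
      ‖v z ^ 2 + (z - c) * (2 * v z * v' z)‖ ≤ 2 * v z ^ 2 + g z ^ 2 := fun z hz => by
    have hsq : ((z - c) * v' z) ^ 2 ≤ g z ^ 2 := sq_le_sq.mpr (hle z hz)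
    rw [Real.norm_eq_abs, abs_le]
    constructor <;>
      nlinarith [sq_nonneg (v z + (z - c) * v' z), sq_nonneg (v z - (z - c) * v' z)]
  calc |x - c| * v x ^ 2 = |(x - c) * v x ^ 2| := by rw [abs_mul, abs_sq]
    _ = |∫ z in c..x, (v z ^ 2 + (z - c) * (2 * v z * v' z))| := by
      rw [sub_mul_sq_eq_integral hv hv']
    _ ≤ |∫ z in c..x, (2 * v z ^ 2 + g z ^ 2)| :=
      intervalIntegral.norm_integral_le_abs_of_norm_le
        ((ae_restrict_mem measurableSet_uIoc).mono fun z hz =>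
          hbound z (Set.uIoc_subset_uIcc hz))
        (ContinuousOn.intervalIntegrable (by fun_prop))

lemma abs_sub_mul_sq_le_integral_add_integral {v v' g : ℝ → ℝ} {a b c x : ℝ}
    (hc : c ∈ Set.Icc a b) (hx : x ∈ Set.Icc a b) (hv : ∀ z ∈ Set.Icc a b, HasDerivAt v (v' z) z)
    (hv' : ContinuousOn v' (Set.Icc a b)) (hg : ContinuousOn g (Set.Icc a b))
    (hle : ∀ z ∈ Set.uIcc c x, |(z - c) * v' z| ≤ |g z|) :
    |x - c| * v x ^ 2 ≤ 2 * (∫ z in a..b, v z ^ 2) + ∫ z in a..b, g z ^ 2 := by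
  have hab : a ≤ b := hx.1.trans hx.2
  have huIcc : Set.uIcc a b = Set.Icc a b := Set.uIcc_of_le hab
  have hsub : Set.uIcc c x ⊆ Set.Icc a b := Set.uIcc_subset_Icc hc hx
  have hv_cont : ContinuousOn v (Set.Icc a b) := HasDerivAt.continuousOn hv
  have hv_int : IntervalIntegrable (fun z => 2 * v z ^ 2) volume a b :=
    ContinuousOn.intervalIntegrable (by rw [huIcc]; fun_prop)
  have hg_int : IntervalIntegrable (fun z => g z ^ 2) volume a b :=
    ContinuousOn.intervalIntegrable (by rw [huIcc]; fun_prop)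
  calc |x - c| * v x ^ 2 ≤ |∫ z in c..x, (2 * v z ^ 2 + g z ^ 2)| :=
        abs_sub_mul_sq_le_abs_integral (fun z hz => hv z (hsub hz)) (hv'.mono hsub)
          (hg.mono hsub) hle
    _ ≤ |∫ z in a..b, (2 * v z ^ 2 + g z ^ 2)| :=
      intervalIntegral.abs_integral_mono_interval
        (Set.uIoc_subset_uIoc_of_uIcc_subset_uIcc (hsub.trans_eq huIcc.symm))
        (Filter.Eventually.of_forall fun z => by positivity) (hv_int.add hg_int)
    _ = ∫ z in a..b, (2 * v z ^ 2 + g z ^ 2) :=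
      abs_of_nonneg (intervalIntegral.integral_nonneg hab fun z _ => by positivity)
    _ = 2 * (∫ z in a..b, v z ^ 2) + ∫ z in a..b, g z ^ 2 := by
      rw [intervalIntegral.integral_add hv_int hg_int, intervalIntegral.integral_const_mul]

lemma exists_mem_Icc_abs_sub_eq {a b x l : ℝ} (hx : x ∈ Set.Icc a b) (hl : 0 ≤ l)
    (hlab : l ≤ (b - a) / 2) : ∃ c ∈ Set.Icc a b, |x - c| = l := by
  obtain ⟨hax, hxb⟩ := hx
  rcases le_total x ((a + b) / 2) with hmid | hmid
  · exact ⟨x + l, ⟨by linarith, by linarith⟩, by simp [abs_of_nonneg hl]⟩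
  · exact ⟨x - l, ⟨by linarith, by linarith⟩, by simp [abs_of_nonneg hl]⟩

lemma abs_sub_le_of_lipschitzWith_one {τ : ℝ → ℝ} {c x z : ℝ} (hτ : LipschitzWith 1 τ)
    (hz : z ∈ Set.uIcc c x) (hc : |x - c| ≤ τ x / 2) : |z - c| ≤ τ z := by
  have hzc : |z - c| ≤ |x - c| := Set.abs_sub_left_of_mem_uIcc hz
  have hxz : |x - z| ≤ |x - c| := Set.abs_sub_right_of_mem_uIcc hz
  have hlip : |τ x - τ z| ≤ |x - z| := by simpa [Real.dist_eq] using hτ.dist_le_mul x z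
  linarith [le_abs_self (τ x - τ z)]

lemma min_mul_sq_le_of_lipschitzWith_one {τ v g : ℝ → ℝ} {a b x : ℝ} (hτ : LipschitzWith 1 τ)
    (hτ_pos : ∀ z ∈ Set.Icc a b, 0 < τ z) (hv : ∀ z ∈ Set.Icc a b, HasDerivAt v (g z / τ z) z)
    (hg : ContinuousOn g (Set.Icc a b)) (hx : x ∈ Set.Icc a b) :
    min (τ x) (b - a) * v x ^ 2 ≤ 4 * ((∫ z in a..b, v z ^ 2) + ∫ z in a..b, g z ^ 2) := by
  have hab : a ≤ b := hx.1.trans hx.2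
  obtain ⟨c, hc, hxc⟩ : ∃ c ∈ Set.Icc a b, |x - c| = min (τ x) (b - a) / 2 :=
    exists_mem_Icc_abs_sub_eq hx
      (div_nonneg (le_min (hτ_pos x hx).le (sub_nonneg.mpr hab)) zero_le_two)
      (by gcongr; exact min_le_right _ _)
  have hle : ∀ z ∈ Set.uIcc c x, |(z - c) * (g z / τ z)| ≤ |g z| := fun z hz => by
    have hτz : 0 < τ z := hτ_pos z (Set.uIcc_subset_Icc hc hx hz)
    have hzc : |z - c| ≤ τ z := abs_sub_le_of_lipschitzWith_one hτ hz
      (hxc.trans_le (by gcongr; exact min_le_left _ _))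
    calc |(z - c) * (g z / τ z)| = |z - c| / τ z * |g z| := by
          rw [abs_mul, abs_div, abs_of_pos hτz]; ring
      _ ≤ |g z| := mul_le_of_le_one_left (abs_nonneg _) ((div_le_one hτz).mpr hzc)
  have hquot : ContinuousOn (fun z => g z / τ z) (Set.Icc a b) :=
    hg.div hτ.continuous.continuousOn fun z hz => (hτ_pos z hz).ne'
  have hbound := abs_sub_mul_sq_le_integral_add_integral hc hx hv hquot hg hle
  have hg_nonneg : 0 ≤ ∫ z in a..b, g z ^ 2 :=
    intervalIntegral.integral_nonneg hab fun z _ => sq_nonneg (g z)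
  rw [hxc] at hbound
  linarith

lemma lipschitzWith_sqrt_sq_add_sq (s : ℝ) : LipschitzWith 1 fun z : ℝ => √(s ^ 2 + z ^ 2) :=
  LipschitzWith.of_dist_le_mul fun x z => by
    simpa [Real.dist_eq, ← Complex.norm_add_mul_I, ← sub_mul, ← Complex.ofReal_sub] using
      abs_norm_sub_norm_le (s + x * Complex.I) (s + z * Complex.I)

lemma hasDerivAt_sqrt_sq_add_sq {s : ℝ} (hs : s ≠ 0) (z : ℝ) :
    HasDerivAt (fun y => √(s ^ 2 + y ^ 2)) (z / √(s ^ 2 + z ^ 2)) z := by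
  have hsq : HasDerivAt (fun y => s ^ 2 + y ^ 2) (2 * z) z := by
    simpa using (hasDerivAt_pow 2 z).const_add (s ^ 2)
  exact (hsq.sqrt (by positivity)).congr_deriv (mul_div_mul_left _ _ two_ne_zero)

lemma sqrt_sq_add_sq_le_sq_sub_one {s x : ℝ} (hs : 2 ≤ s) (hx : |x| ≤ (s ^ 2 - 1) / 2) :
    √(s ^ 2 + x ^ 2) ≤ s ^ 2 - 1 := by
  have hx_sq : x ^ 2 ≤ ((s ^ 2 - 1) / 2) ^ 2 := sq_le_sq' (abs_le.mp hx).1 (abs_le.mp hx).2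
  calc √(s ^ 2 + x ^ 2) ≤ (s ^ 2 + 1) / 2 :=
        Real.sqrt_le_iff.mpr ⟨by positivity, by linarith⟩
    _ ≤ s ^ 2 - 1 := by nlinarith

section LorentzBoost

variable {u : ℝ → ℝ → ℝ}

lemma Lop_eq_fderiv {t x : ℝ} (hu : DifferentiableAt ℝ (Function.uncurry u) (t, x)) :
    Lop u t x = fderiv ℝ (Function.uncurry u) (t, x) (x, t) := by
  have hDt : Dt u t x = fderiv ℝ (Function.uncurry u) (t, x) (1, 0) :=
    (hu.hasFDerivAt.comp_hasDerivAt t (f := fun τ => (τ, x))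
      ((hasDerivAt_id t).prodMk (hasDerivAt_const t x))).deriv
  have hDx : Dx u t x = fderiv ℝ (Function.uncurry u) (t, x) (0, 1) :=
    (hu.hasFDerivAt.comp_hasDerivAt x (f := fun y => (t, y))
      ((hasDerivAt_const x t).prodMk (hasDerivAt_id x))).deriv
  have hdecomp : ((x, t) : ℝ × ℝ) = x • (1, 0) + t • (0, 1) := by simp
  rw [Lop, hDt, hDx, hdecomp, map_add, map_smul, map_smul, smul_eq_mul, smul_eq_mul]

lemma continuousAt_uncurry_Lop {p : ℝ × ℝ} (hu : ContDiffAt ℝ 1 (Function.uncurry u) p) :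
    ContinuousAt (Function.uncurry (Lop u)) p := by
  have hfderiv : ContinuousAt (fderiv ℝ (Function.uncurry u)) p :=
    hu.continuousAt_fderiv one_ne_zero
  have hLop : (fun q : ℝ × ℝ => fderiv ℝ (Function.uncurry u) q q.swap) =ᶠ[nhds p]
      Function.uncurry (Lop u) := by
    filter_upwards [hu.eventually (by simp)] with q hq
    exact (Lop_eq_fderiv (hq.differentiableAt one_ne_zero)).symm
  exact (hfderiv.clm_apply continuous_swap.continuousAt).congr hLop

lemma hasDerivAt_comp_sqrt_sq_add_sq {s z : ℝ} (hs : s ≠ 0)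
    (hu : DifferentiableAt ℝ (Function.uncurry u) (√(s ^ 2 + z ^ 2), z)) :
    HasDerivAt (fun y => u √(s ^ 2 + y ^ 2) y)
      (Lop u √(s ^ 2 + z ^ 2) z / √(s ^ 2 + z ^ 2)) z := by
  have hτ : √(s ^ 2 + z ^ 2) ≠ 0 := by positivity
  have htangent : ((z / √(s ^ 2 + z ^ 2), 1) : ℝ × ℝ) =
      (√(s ^ 2 + z ^ 2))⁻¹ • (z, √(s ^ 2 + z ^ 2)) := by
    simp [hτ, div_eq_inv_mul]
  refine (hu.hasFDerivAt.comp_hasDerivAt z (f := fun y => (√(s ^ 2 + y ^ 2), y))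
    ((hasDerivAt_sqrt_sq_add_sq hs z).prodMk (hasDerivAt_id z))).congr_deriv ?_
  rw [htangent, map_smul, ← Lop_eq_fderiv hu, smul_eq_mul, div_eq_inv_mul]

end LorentzBoost

theorem stmt4_general {s R : ℝ} (hs : s ≠ 0) {u : ℝ → ℝ → ℝ}
    (hu : ∀ z : ℝ, |z| ≤ R → ContDiffAt ℝ 1 (Function.uncurry u) (√(s ^ 2 + z ^ 2), z))
    {x : ℝ} (hx : |x| ≤ R) :
    min √(s ^ 2 + x ^ 2) (2 * R) * u √(s ^ 2 + x ^ 2) x ^ 2 ≤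
      4 * ((∫ z in (-R)..R, u √(s ^ 2 + z ^ 2) z ^ 2) +
        ∫ z in (-R)..R, Lop u √(s ^ 2 + z ^ 2) z ^ 2) := by
  have hτ := lipschitzWith_sqrt_sq_add_sq s
  have hLop : ContinuousOn (fun z => Lop u √(s ^ 2 + z ^ 2) z) (Set.Icc (-R) R) := fun z hz =>
    (ContinuousAt.comp (f := fun y : ℝ => (√(s ^ 2 + y ^ 2), y))
      (continuousAt_uncurry_Lop (hu z (abs_le.mpr hz)))
      (hτ.continuous.prodMk continuous_id).continuousAt).continuousWithinAt
  rw [show 2 * R = R - -R by ring]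
  exact min_mul_sq_le_of_lipschitzWith_one hτ (fun z _ => by positivity)
    (fun z hz => hasDerivAt_comp_sqrt_sq_add_sq hs
      ((hu z (abs_le.mpr hz)).differentiableAt one_ne_zero)) hLop (abs_le.mp hx)

/-- global Sobolev inequality on the hyperboloid arc
`H_s = {(√(s²+x²),x) : |x| ≤ (s²−1)/2}`: there is a universal `C > 0` such that for every
`s ≥ 2`, every `C¹` function `u` on a neighborhood of `H_s`, and every `|x| ≤ (s²−1)/2`,
`√(s²+x²)·u(√(s²+x²),x)² ≤ C (‖u‖²_{L²(H_s)} + ‖Lu‖²_{L²(H_s)})`. -/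
theorem stmt4 :
    ∃ C > (0:ℝ), ∀ s : ℝ, 2 ≤ s →
      ∀ U : Set (ℝ × ℝ), IsOpen U →
        {p : ℝ × ℝ | ∃ z : ℝ, |z| ≤ (s^2 - 1)/2 ∧ p = (Real.sqrt (s^2 + z^2), z)} ⊆ U →
      ∀ u : ℝ → ℝ → ℝ, ContDiffOn ℝ 1 (fun p : ℝ × ℝ => u p.1 p.2) U →
      ∀ x : ℝ, |x| ≤ (s^2 - 1)/2 →
        Real.sqrt (s^2 + x^2) * (u (Real.sqrt (s^2 + x^2)) x)^2 ≤
          C * ((∫ z in (-((s^2 - 1)/2))..((s^2 - 1)/2), (u (Real.sqrt (s^2 + z^2)) z)^2) +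
               (∫ z in (-((s^2 - 1)/2))..((s^2 - 1)/2), (Lop u (Real.sqrt (s^2 + z^2)) z)^2)) := by
  refine ⟨4, by norm_num, fun s hs U hU hsub u hu x hx => ?_⟩
  have hτ : √(s ^ 2 + x ^ 2) ≤ 2 * ((s ^ 2 - 1) / 2) := by
    linarith [sqrt_sq_add_sq_le_sq_sub_one hs hx]
  simpa only [min_eq_left hτ] using stmt4_general (by positivity)
    (fun z hz => hu.contDiffAt (hU.mem_nhds (hsub ⟨z, hz, rfl⟩))) hx
end

section
/- For all nonnegative integers a, b, j there exists a constant C = C(a,b,j) > 0 such that for every (t,x) ∈ ℝ² with t ≥ 0 and |x| − t ≥ 1, one has |∂_t^a ∂_x^b ( L^j ( (|x|−t)^{−1} ) )(t,x)| ≤ C (1 + (|x|−t))^{−1−a−b}, where the function (t,x) ↦ (|x|−t)^{−1} is smooth on the region {|x| − t ≥ 1}. -/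
open MeasureTheory

open Topology

/-!
Write `s = |x| - t` and `σ = sign x`. Away from `x = 0` the sign `σ` is locally constant, and
`∂_t s = -1`, `∂_x s = σ`. Hence `∂_t` and `∂_x` send `s ^ p` to a multiple of `s ^ (p - 1)`, while
`L (s ^ p) = p (t σ - x) s ^ (p - 1) = -p σ s ^ p` because `x = σ |x|`: the boost keeps the
exponent. The function to be estimated is thus a constant, depending only on `σ`, times
`s ^ (-1 - a - b)`, and `s` is comparable to `1 + s` as soon as it is bounded away from `0`.
-/

/-- The function `u` is a multiple of the `p`-th power of `|x| - t` on each half `x < 0`, `x > 0` of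
the exterior `t < |x|` of the forward light cone. Such functions are stable under `∂_t`, `∂_x` and
`L`. The coefficients are stored as `c (sign x)`, so that both halves are treated at once; `c 0` is
irrelevant. -/
def IsConePower (c : SignType → ℝ) (p : ℝ) (u : ℝ → ℝ → ℝ) : Prop :=
  ∀ t x : ℝ, x ≠ 0 → t < |x| → u t x = c (SignType.sign x) * (|x| - t) ^ p

namespace IsConePower

variable {c : SignType → ℝ} {p : ℝ} {u : ℝ → ℝ → ℝ}

lemma dt (h : IsConePower c p u) : IsConePower (fun ε => -p * c ε) (p - 1) (Dt u) := by
  intro t x hx ht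
  have hu : (fun τ => u τ x) =ᶠ[𝓝 t] fun τ => c (SignType.sign x) * (|x| - τ) ^ p := by
    filter_upwards [Iio_mem_nhds ht] with τ hτ using h τ x hx hτ
  have hs : HasDerivAt (fun τ => |x| - τ) (-1) t := (hasDerivAt_id t).const_sub |x|
  have hpow := (hs.rpow_const (p := p) (Or.inl (sub_pos.2 ht).ne')).const_mul (c (SignType.sign x))
  rw [Dt, hu.deriv_eq, hpow.deriv]
  ring

lemma dx (h : IsConePower c p u) : IsConePower (fun ε => p * ε * c ε) (p - 1) (Dx u) := by
  intro t x hx ht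
  have hu : (fun y => u t y) =ᶠ[𝓝 x] fun y => c (SignType.sign x) * (|y| - t) ^ p := by
    have hsign : ∀ᶠ y in 𝓝 x, SignType.sign y = SignType.sign x :=
      (continuousAt_sign_of_ne_zero hx).eventually_mem
        (s := {SignType.sign x}) (mem_nhds_discrete.2 rfl)
    have hlt : ∀ᶠ y in 𝓝 x, t < |y| := continuous_abs.continuousAt.eventually_const_lt ht
    filter_upwards [hsign, hlt, isOpen_ne.mem_nhds hx] with y hy hty hy0
    rw [h t y hy0 hty, hy]
  have hs : HasDerivAt (fun y => |y| - t) (SignType.sign x : ℝ) x := (hasDerivAt_abs hx).sub_const t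
  have hpow := (hs.rpow_const (p := p) (Or.inl (sub_pos.2 ht).ne')).const_mul (c (SignType.sign x))
  rw [Dx, hu.deriv_eq, hpow.deriv]
  ring

lemma lop (h : IsConePower c p u) : IsConePower (fun ε => -p * ε * c ε) p (Lop u) := by
  intro t x hx ht
  have hpow : (|x| - t) ^ p = (|x| - t) ^ (p - 1) * (|x| - t) := by
    rw [← Real.rpow_add_one (sub_pos.2 ht).ne', sub_add_cancel]
  have habs : x = SignType.sign x * |x| := (sign_mul_abs x).symm
  rw [Lop, h.dt t x hx ht, h.dx t x hx ht, hpow]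
  linear_combination (-p * c (SignType.sign x) * (|x| - t) ^ (p - 1)) * habs

lemma iterate_dt (h : IsConePower c p u) (a : ℕ) :
    IsConePower (fun ε => (-1) ^ a * (descPochhammer ℝ a).eval p * c ε) (p - a) (Dt^[a] u) := by
  induction a with
  | zero => simpa using h
  | succ a ih =>
    rw [Function.iterate_succ_apply']
    convert ih.dt using 1
    · funext ε
      rw [descPochhammer_succ_eval]
      ring
    · push_cast
      ring

lemma iterate_dx (h : IsConePower c p u) (b : ℕ) :
    IsConePower (fun ε => (ε : ℝ) ^ b * (descPochhammer ℝ b).eval p * c ε) (p - b) (Dx^[b] u) := by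
  induction b with
  | zero => simpa using h
  | succ b ih =>
    rw [Function.iterate_succ_apply']
    convert ih.dx using 1
    · funext ε
      rw [descPochhammer_succ_eval]
      ring
    · push_cast
      ring

lemma iterate_lop (h : IsConePower c p u) (j : ℕ) :
    IsConePower (fun ε => (-p * ε) ^ j * c ε) p (Lop^[j] u) := by
  induction j with
  | zero => simpa using h
  | succ j ih =>
    rw [Function.iterate_succ_apply']
    convert ih.lop using 2 with ε
    ring

end IsConePower

lemma isConePower_abs_sub_rpow (p : ℝ) : IsConePower 1 p (fun t x => (|x| - t) ^ p) :=
  fun _ _ _ _ => (one_mul _).symm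

lemma rpow_le_mul_one_add_rpow {δ s : ℝ} (hδ : 0 < δ) (hs : δ ≤ s) (p : ℝ) :
    s ^ p ≤ (1 + δ⁻¹) ^ |p| * (1 + s) ^ p := by
  have hs0 : 0 < s := hδ.trans_le hs
  have hK : 1 ≤ 1 + δ⁻¹ := le_add_of_nonneg_right (inv_pos.2 hδ).le
  rcases le_total 0 p with hp | hp
  · calc s ^ p ≤ (1 + s) ^ p := Real.rpow_le_rpow hs0.le (by linarith) hp
      _ ≤ (1 + δ⁻¹) ^ |p| * (1 + s) ^ p :=
        le_mul_of_one_le_left (by positivity) (Real.one_le_rpow hK (abs_nonneg p))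
  · have hle : 1 + s ≤ (1 + δ⁻¹) * s := by
      have : 1 ≤ δ⁻¹ * s := by rwa [← div_eq_inv_mul, one_le_div hδ]
      linarith
    calc s ^ p = (1 + δ⁻¹) ^ |p| * ((1 + δ⁻¹) * s) ^ p := by
          rw [Real.mul_rpow (by positivity) hs0.le, ← mul_assoc, abs_of_nonpos hp,
            ← Real.rpow_add (by positivity), neg_add_cancel, Real.rpow_zero, one_mul]
      _ ≤ (1 + δ⁻¹) ^ |p| * (1 + s) ^ p := by
          gcongr ?_ * ?_
          exact Real.rpow_le_rpow_of_nonpos (by positivity) hle hp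

lemma IsConePower.exists_abs_le {c : SignType → ℝ} {p : ℝ} {u : ℝ → ℝ → ℝ}
    (h : IsConePower c p u) {δ : ℝ} (hδ : 0 < δ) :
    ∃ C > (0 : ℝ), ∀ t x : ℝ, x ≠ 0 → δ ≤ |x| - t → |u t x| ≤ C * (1 + (|x| - t)) ^ p := by
  refine ⟨(∑ ε, |c ε| + 1) * (1 + δ⁻¹) ^ |p|, by positivity, fun t x hx hδx => ?_⟩
  have hs : 0 < |x| - t := hδ.trans_le hδx
  have hc : |c (SignType.sign x)| ≤ ∑ ε, |c ε| + 1 :=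
    (Finset.single_le_sum (fun ε _ => abs_nonneg (c ε)) (Finset.mem_univ _)).trans
      (le_add_of_nonneg_right zero_le_one)
  calc |u t x| = |c (SignType.sign x)| * (|x| - t) ^ p := by
        rw [h t x hx (sub_pos.1 hs), abs_mul, abs_of_pos (Real.rpow_pos_of_pos hs p)]
    _ ≤ (∑ ε, |c ε| + 1) * ((1 + δ⁻¹) ^ |p| * (1 + (|x| - t)) ^ p) := by
        gcongr
        exact rpow_le_mul_one_add_rpow hδ hδx p
    _ = (∑ ε, |c ε| + 1) * (1 + δ⁻¹) ^ |p| * (1 + (|x| - t)) ^ p := (mul_assoc _ _ _).symm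

theorem stmt9_general (p : ℝ) {δ : ℝ} (hδ : 0 < δ) (a b j : ℕ) :
    ∃ C > (0 : ℝ), ∀ t x : ℝ, x ≠ 0 → δ ≤ |x| - t →
      |(Dt^[a] (Dx^[b] (Lop^[j] (fun t x => (|x| - t) ^ p)))) t x| ≤
        C * (1 + (|x| - t)) ^ (p - b - a) :=
  ((((isConePower_abs_sub_rpow p).iterate_lop j).iterate_dx b).iterate_dt a).exists_abs_le hδ

/-- `|∂_t^a ∂_x^b L^j ((|x|−t)^{−1})| ≤ C(a,b,j)(1+(|x|−t))^{−1−a−b}`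
on the region `{t ≥ 0, |x|−t ≥ 1}`. -/
theorem stmt9 (a b j : ℕ) :
    ∃ C > (0:ℝ), ∀ t x : ℝ, 0 ≤ t → 1 ≤ |x| - t →
      |(Dt^[a] (Dx^[b] (Lop^[j] (fun t x => (|x| - t)⁻¹)))) t x| ≤
        C * (1 + (|x| - t)) ^ (-(1 + (a:ℤ) + (b:ℤ))) := by
  obtain ⟨C, hC, hbound⟩ := stmt9_general (-1) one_pos a b j
  refine ⟨C, hC, fun t x ht hx => ?_⟩
  have hexp : (-1 : ℝ) - b - a = ((-(1 + (a : ℤ) + (b : ℤ)) : ℤ) : ℝ) := by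
    push_cast
    ring
  simpa only [Real.rpow_neg_one, hexp, Real.rpow_intCast] using
    hbound t x (abs_pos.1 (by linarith)) hx
end

section
/- Let u be a twice continuously differentiable function on an open subset of {(t,x) ∈ ℝ² : t > 0}. Then on that set the wave operator decomposes as □u = (1 − (x/t)²) ∂_t∂_t u + t^{−1} ( (x/t) ∂_t(Lu) − ∂_x(Lu) − (x/t) ∂_x u + ∂_t u ). -/
open MeasureTheory

/-!
By the product rule, `∂_t(Lu) = x ∂_t∂_t u + ∂_x u + t ∂_t∂_x u` and
`∂_x(Lu) = ∂_t u + x ∂_x∂_t u + t ∂_x∂_x u`. In the combination `(x/t) ∂_t(Lu) - ∂_x(Lu)` the mixed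
derivatives both carry the weight `x`, so they cancel by symmetry of the second derivative, and
what is left expresses `∂_x∂_x u` through `∂_t∂_t u` and first-order terms.
-/

/-- Twice Fréchet differentiability at a point: `f` is differentiable near `p` and its derivative is
differentiable at `p`. This regularity makes the second derivative at `p` symmetric even if it is
not continuous. Differentiability near `p` is a separate clause because `fderiv 𝕜 f` is `0` at
points where `f` is not differentiable. -/
def TwiceDifferentiableAt (𝕜 : Type*) [NontriviallyNormedField 𝕜] {E F : Type*}
    [NormedAddCommGroup E] [NormedSpace 𝕜 E] [NormedAddCommGroup F] [NormedSpace 𝕜 F]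
    (f : E → F) (p : E) : Prop :=
  (∀ᶠ q in nhds p, DifferentiableAt 𝕜 f q) ∧ DifferentiableAt 𝕜 (fderiv 𝕜 f) p

section NormedSpace

variable {𝕜 E F : Type*} [NontriviallyNormedField 𝕜] [NormedAddCommGroup E] [NormedSpace 𝕜 E]
  [NormedAddCommGroup F] [NormedSpace 𝕜 F]

theorem TwiceDifferentiableAt.of_contDiffAt {f : E → F} {p : E} (hf : ContDiffAt 𝕜 2 f p) :
    TwiceDifferentiableAt 𝕜 f p :=
  ⟨(hf.eventually (by simp)).mono fun _ hq => hq.differentiableAt two_ne_zero,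
    (hf.fderiv_right one_add_one_eq_two.le).differentiableAt one_ne_zero⟩

theorem TwiceDifferentiableAt.isSymmSndFDerivAt [IsRCLikeNormedField 𝕜] {f : E → F} {p : E}
    (hf : TwiceDifferentiableAt 𝕜 f p) : IsSymmSndFDerivAt 𝕜 f p :=
  second_derivative_symmetric_of_eventually (hf.1.mono fun _ hq => hq.hasFDerivAt)
    hf.2.hasFDerivAt

theorem hasFDerivAt_fderiv_apply {f : E → F} {p : E} (hf : DifferentiableAt 𝕜 (fderiv 𝕜 f) p)
    (v : E) :
    HasFDerivAt (fun q => fderiv 𝕜 f q v) ((fderiv 𝕜 (fderiv 𝕜 f) p).flip v) p := by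
  simpa using hf.hasFDerivAt.clm_apply (hasFDerivAt_const v p)

theorem hasDerivAt_comp_prodMk_left {f : 𝕜 × E → F} {f' : 𝕜 × E →L[𝕜] F} {t : 𝕜} {x : E}
    (hf : HasFDerivAt f f' (t, x)) : HasDerivAt (fun τ => f (τ, x)) (f' (1, 0)) t :=
  hf.comp_hasDerivAt t ((hasDerivAt_id t).prodMk (hasDerivAt_const t x))

theorem hasDerivAt_comp_prodMk_right {f : E × 𝕜 → F} {f' : E × 𝕜 →L[𝕜] F} {t : E} {x : 𝕜}
    (hf : HasFDerivAt f f' (t, x)) : HasDerivAt (fun y => f (t, y)) (f' (0, 1)) x :=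
  hf.comp_hasDerivAt x ((hasDerivAt_const x t).prodMk (hasDerivAt_id x))

end NormedSpace

section PartialDerivatives

open Function

variable {u : ℝ → ℝ → ℝ} {t x : ℝ}

theorem Dt_eq_fderiv (hu : DifferentiableAt ℝ (uncurry u) (t, x)) :
    Dt u t x = fderiv ℝ (uncurry u) (t, x) (1, 0) :=
  (hasDerivAt_comp_prodMk_left hu.hasFDerivAt).deriv

theorem Dx_eq_fderiv (hu : DifferentiableAt ℝ (uncurry u) (t, x)) :
    Dx u t x = fderiv ℝ (uncurry u) (t, x) (0, 1) :=
  (hasDerivAt_comp_prodMk_right hu.hasFDerivAt).deriv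

theorem TwiceDifferentiableAt.hasFDerivAt_Dt
    (hu : TwiceDifferentiableAt ℝ (uncurry u) (t, x)) :
    HasFDerivAt (uncurry (Dt u))
      ((fderiv ℝ (fderiv ℝ (uncurry u)) (t, x)).flip (1, 0)) (t, x) :=
  (hasFDerivAt_fderiv_apply hu.2 (1, 0)).congr_of_eventuallyEq
    (hu.1.mono fun _ hq => Dt_eq_fderiv hq)

theorem TwiceDifferentiableAt.hasFDerivAt_Dx
    (hu : TwiceDifferentiableAt ℝ (uncurry u) (t, x)) :
    HasFDerivAt (uncurry (Dx u))
      ((fderiv ℝ (fderiv ℝ (uncurry u)) (t, x)).flip (0, 1)) (t, x) :=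
  (hasFDerivAt_fderiv_apply hu.2 (0, 1)).congr_of_eventuallyEq
    (hu.1.mono fun _ hq => Dx_eq_fderiv hq)

theorem TwiceDifferentiableAt.Dt_Dx_eq_Dx_Dt
    (hu : TwiceDifferentiableAt ℝ (uncurry u) (t, x)) : Dt (Dx u) t x = Dx (Dt u) t x :=
  calc
    Dt (Dx u) t x = fderiv ℝ (fderiv ℝ (uncurry u)) (t, x) (1, 0) (0, 1) :=
      (hasDerivAt_comp_prodMk_left hu.hasFDerivAt_Dx).deriv
    _ = fderiv ℝ (fderiv ℝ (uncurry u)) (t, x) (0, 1) (1, 0) := hu.isSymmSndFDerivAt _ _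
    _ = Dx (Dt u) t x := (hasDerivAt_comp_prodMk_right hu.hasFDerivAt_Dt).deriv.symm

theorem Dt_Lop (htt : DifferentiableAt ℝ (fun τ => Dt u τ x) t)
    (htx : DifferentiableAt ℝ (fun τ => Dx u τ x) t) :
    Dt (Lop u) t x = x * Dt (Dt u) t x + (Dx u t x + t * Dt (Dx u) t x) := by
  have hL : HasDerivAt (fun τ => Lop u τ x)
      (x * Dt (Dt u) t x + (1 * Dx u t x + t * Dt (Dx u) t x)) t :=
    (htt.hasDerivAt.const_mul x).add ((hasDerivAt_id t).mul htx.hasDerivAt)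
  exact hL.deriv.trans (by rw [one_mul])

theorem Dx_Lop (hxt : DifferentiableAt ℝ (fun y => Dt u t y) x)
    (hxx : DifferentiableAt ℝ (fun y => Dx u t y) x) :
    Dx (Lop u) t x = (Dt u t x + x * Dx (Dt u) t x) + t * Dx (Dx u) t x := by
  have hL : HasDerivAt (fun y => Lop u t y)
      ((1 * Dt u t x + x * Dx (Dt u) t x) + t * Dx (Dx u) t x) x :=
    ((hasDerivAt_id x).mul hxt.hasDerivAt).add (hxx.hasDerivAt.const_mul t)
  exact hL.deriv.trans (by rw [one_mul])

end PartialDerivatives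

theorem stmt10_general {u : ℝ → ℝ → ℝ} {t x : ℝ} (ht : t ≠ 0)
    (hu : TwiceDifferentiableAt ℝ (Function.uncurry u) (t, x)) :
    Box u t x =
      (1 - (x / t) ^ 2) * Dt (Dt u) t x
      + t⁻¹ * ((x / t) * Dt (Lop u) t x - Dx (Lop u) t x
          - (x / t) * Dx u t x + Dt u t x) := by
  have hDtL : Dt (Lop u) t x = x * Dt (Dt u) t x + (Dx u t x + t * Dt (Dx u) t x) :=
    Dt_Lop (hasDerivAt_comp_prodMk_left hu.hasFDerivAt_Dt).differentiableAt
      (hasDerivAt_comp_prodMk_left hu.hasFDerivAt_Dx).differentiableAt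
  have hDxL : Dx (Lop u) t x = (Dt u t x + x * Dx (Dt u) t x) + t * Dx (Dx u) t x :=
    Dx_Lop (hasDerivAt_comp_prodMk_right hu.hasFDerivAt_Dt).differentiableAt
      (hasDerivAt_comp_prodMk_right hu.hasFDerivAt_Dx).differentiableAt
  rw [hDtL, hDxL, hu.Dt_Dx_eq_Dx_Dt, Box]
  field_simp
  ring

/-- the semi-hyperboloidal decomposition of the wave operator
`□u = (1 − (x/t)²)∂_t∂_t u + t⁻¹((x/t)∂_t(Lu) − ∂_x(Lu) − (x/t)∂_x u + ∂_t u)`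
on an open subset of `{t > 0}`, for `u` twice continuously differentiable there. -/
theorem stmt10 (u : ℝ → ℝ → ℝ) (U : Set (ℝ × ℝ)) (hU : IsOpen U)
    (hUsub : U ⊆ {p : ℝ × ℝ | 0 < p.1})
    (hu : ContDiffOn ℝ 2 (fun p : ℝ × ℝ => u p.1 p.2) U) :
    ∀ p ∈ U, Box u p.1 p.2 =
      (1 - (p.2/p.1)^2) * Dt (Dt u) p.1 p.2
      + p.1⁻¹ * ((p.2/p.1) * Dt (Lop u) p.1 p.2 - Dx (Lop u) p.1 p.2
          - (p.2/p.1) * Dx u p.1 p.2 + Dt u p.1 p.2) :=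
  fun _ hp => stmt10_general (hUsub hp).ne' (.of_contDiffAt (hu.contDiffAt (hU.mem_nhds hp)))
end

section
/- For all nonnegative integers a, b, j there exists a constant C = C(a,b,j) > 0 such that for every smooth function u on {(t,x) ∈ ℝ² : t > 0, x ≠ 0} and every point (t,x) with t > 0 and x ≠ 0, one has |(|x| − t) · ∂_t∂_t (∂_t^a ∂_x^b L^j u)(t,x)| ≤ (t²/|x|) |□(∂_t^a ∂_x^b L^j u)(t,x)| + C · Σ |∂_α (∂_t^{a′} ∂_x^{b′} L^{j′} u)(t,x)|, where the sum runs over α ∈ {t,x}, nonnegative integers a′, b′ with a′ + b′ ≤ a + b, and j′ ≤ j + 1. -/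
open MeasureTheory

/-!
Since `L ∂_t v = x v_tt + t v_tx` and `L ∂_x v = x v_tx + t v_xx`, eliminating `v_tx` gives
`(x² - t²) v_tt = x L ∂_t v - t L ∂_x v - t² □v`, and dividing by `|x| + |t|` bounds
`||x| - |t|| |v_tt|` by `(t² / |x|) |□v|` plus a convex combination of `|L ∂_t v|` and `|L ∂_x v|`.
For `v = ∂_t^a ∂_x^b L^j u` the boost is moved next to `u` with `[L, ∂_t] = -∂_x` and
`[L, ∂_x] = -∂_t`; each commutator preserves the number of derivatives, so every resulting term
occurs in the sum on the right-hand side.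
-/

open Filter Function
open scoped Topology

variable {f g u : ℝ → ℝ → ℝ} {p : ℝ × ℝ} {t x : ℝ} {n : WithTop ℕ∞}

section PartialDerivatives

theorem dt_congr (h : uncurry f =ᶠ[𝓝 (t, x)] uncurry g) : Dt f t x = Dt g t x :=
  EventuallyEq.deriv_eq <| h.comp_tendsto (Continuous.prodMk_left x).continuousAt

theorem dx_congr (h : uncurry f =ᶠ[𝓝 (t, x)] uncurry g) : Dx f t x = Dx g t x :=
  EventuallyEq.deriv_eq <| h.comp_tendsto (Continuous.prodMk_right t).continuousAt

theorem lop_congr (h : uncurry f =ᶠ[𝓝 (t, x)] uncurry g) : Lop f t x = Lop g t x := by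
  simp only [Lop, dt_congr h, dx_congr h]

theorem hasDerivAt_fderiv_left (hf : DifferentiableAt ℝ (uncurry f) (t, x)) :
    HasDerivAt (fun s => f s x) (fderiv ℝ (uncurry f) (t, x) (1, 0)) t :=
  hf.hasFDerivAt.comp_hasDerivAt (f := fun s : ℝ => (s, x)) t
    ((hasDerivAt_id t).prodMk (hasDerivAt_const t x))

theorem hasDerivAt_fderiv_right (hf : DifferentiableAt ℝ (uncurry f) (t, x)) :
    HasDerivAt (fun y => f t y) (fderiv ℝ (uncurry f) (t, x) (0, 1)) x :=
  hf.hasFDerivAt.comp_hasDerivAt (f := fun y : ℝ => (t, y)) x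
    ((hasDerivAt_const x t).prodMk (hasDerivAt_id x))

theorem dt_eq_fderiv (hf : DifferentiableAt ℝ (uncurry f) (t, x)) :
    Dt f t x = fderiv ℝ (uncurry f) (t, x) (1, 0) :=
  (hasDerivAt_fderiv_left hf).deriv

theorem dx_eq_fderiv (hf : DifferentiableAt ℝ (uncurry f) (t, x)) :
    Dx f t x = fderiv ℝ (uncurry f) (t, x) (0, 1) :=
  (hasDerivAt_fderiv_right hf).deriv

theorem hasDerivAt_dt (hf : DifferentiableAt ℝ (uncurry f) (t, x)) :
    HasDerivAt (fun s => f s x) (Dt f t x) t :=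
  (hasDerivAt_fderiv_left hf).differentiableAt.hasDerivAt

theorem hasDerivAt_dx (hf : DifferentiableAt ℝ (uncurry f) (t, x)) :
    HasDerivAt (fun y => f t y) (Dx f t x) x :=
  (hasDerivAt_fderiv_right hf).differentiableAt.hasDerivAt

theorem uncurry_dt_eventuallyEq (hf : ContDiffAt ℝ 1 (uncurry f) p) :
    uncurry (Dt f) =ᶠ[𝓝 p] fun q => fderiv ℝ (uncurry f) q (1, 0) := by
  filter_upwards [hf.eventually (by simp)] with q hq
    using dt_eq_fderiv (hq.differentiableAt one_ne_zero)

theorem uncurry_dx_eventuallyEq (hf : ContDiffAt ℝ 1 (uncurry f) p) :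
    uncurry (Dx f) =ᶠ[𝓝 p] fun q => fderiv ℝ (uncurry f) q (0, 1) := by
  filter_upwards [hf.eventually (by simp)] with q hq
    using dx_eq_fderiv (hq.differentiableAt one_ne_zero)

end PartialDerivatives

section Regularity

theorem contDiffAt_dt (hf : ContDiffAt ℝ (n + 1) (uncurry f) p) :
    ContDiffAt ℝ n (uncurry (Dt f)) p :=
  ((hf.fderiv_right le_rfl).clm_apply contDiffAt_const).congr_of_eventuallyEq
    (uncurry_dt_eventuallyEq (hf.of_le le_add_self))

theorem contDiffAt_dx (hf : ContDiffAt ℝ (n + 1) (uncurry f) p) :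
    ContDiffAt ℝ n (uncurry (Dx f)) p :=
  ((hf.fderiv_right le_rfl).clm_apply contDiffAt_const).congr_of_eventuallyEq
    (uncurry_dx_eventuallyEq (hf.of_le le_add_self))

theorem differentiableAt_dt (hf : ContDiffAt ℝ 2 (uncurry f) p) :
    DifferentiableAt ℝ (uncurry (Dt f)) p :=
  (contDiffAt_dt (hf.of_le one_add_one_eq_two.le)).differentiableAt one_ne_zero

theorem differentiableAt_dx (hf : ContDiffAt ℝ 2 (uncurry f) p) :
    DifferentiableAt ℝ (uncurry (Dx f)) p :=
  (contDiffAt_dx (hf.of_le one_add_one_eq_two.le)).differentiableAt one_ne_zero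

theorem contDiffAt_lop (hf : ContDiffAt ℝ (n + 1) (uncurry f) p) :
    ContDiffAt ℝ n (uncurry (Lop f)) p :=
  (contDiffAt_snd.mul (contDiffAt_dt hf)).add (contDiffAt_fst.mul (contDiffAt_dx hf))

theorem contDiffAt_iterate {D : (ℝ → ℝ → ℝ) → ℝ → ℝ → ℝ}
    (hD : ∀ {n : WithTop ℕ∞} {f : ℝ → ℝ → ℝ}, ContDiffAt ℝ (n + 1) (uncurry f) p →
      ContDiffAt ℝ n (uncurry (D f)) p)
    (k : ℕ) (hf : ContDiffAt ℝ (n + k) (uncurry f) p) : ContDiffAt ℝ n (uncurry (D^[k] f)) p := by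
  induction k generalizing f with
  | zero => simpa using hf
  | succ k ih => exact ih (hD (by simpa [add_assoc] using hf))

theorem contDiffAt_iterate_dt_iterate_dx (k l : ℕ)
    (hf : ContDiffAt ℝ (n + (k + l : ℕ)) (uncurry f) p) :
    ContDiffAt ℝ n (uncurry (Dt^[k] (Dx^[l] f))) p :=
  contDiffAt_iterate contDiffAt_dt k <|
    contDiffAt_iterate contDiffAt_dx l (by rwa [add_assoc, ← Nat.cast_add])

end Regularity

section Commutators

theorem dx_dt_comm (hf : ContDiffAt ℝ 2 (uncurry f) (t, x)) :
    Dx (Dt f) t x = Dt (Dx f) t x := by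
  have hf1 : ContDiffAt ℝ 1 (uncurry f) (t, x) := hf.of_le one_le_two
  have hf' : DifferentiableAt ℝ (fderiv ℝ (uncurry f)) (t, x) :=
    (hf.fderiv_right one_add_one_eq_two.le).differentiableAt one_ne_zero
  have hsymm : IsSymmSndFDerivAt ℝ (uncurry f) (t, x) := hf.isSymmSndFDerivAt (by simp)
  rw [dx_eq_fderiv (differentiableAt_dt hf), dt_eq_fderiv (differentiableAt_dx hf),
    (uncurry_dt_eventuallyEq hf1).fderiv_eq, (uncurry_dx_eventuallyEq hf1).fderiv_eq,
    fderiv_clm_apply hf' (differentiableAt_const _),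
    fderiv_clm_apply hf' (differentiableAt_const _)]
  simpa using hsymm (0, 1) (1, 0)

theorem dx_iterate_dt_comm (k : ℕ) (hf : ContDiffAt ℝ (k + 1 : ℕ) (uncurry f) (t, x)) :
    Dx (Dt^[k] f) t x = Dt^[k] (Dx f) t x := by
  induction k generalizing t x with
  | zero => rfl
  | succ k ih =>
    have hk : ContDiffAt ℝ 2 (uncurry (Dt^[k] f)) (t, x) :=
      contDiffAt_iterate contDiffAt_dt k (hf.of_le (by norm_cast; omega))
    have ih' : uncurry (Dx (Dt^[k] f)) =ᶠ[𝓝 (t, x)] uncurry (Dt^[k] (Dx f)) := by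
      filter_upwards [hf.eventually (mod_cast ENat.natCast_ne_top _)] with q hq
        using ih (hq.of_le (by norm_cast; omega))
    rw [iterate_succ_apply', iterate_succ_apply', dx_dt_comm hk, dt_congr ih']

theorem lop_dx_iterate_dt (k : ℕ) (hf : ContDiffAt ℝ (k + 1 : ℕ) (uncurry f) (t, x)) :
    Lop (Dx (Dt^[k] f)) t x = Lop (Dt^[k] (Dx f)) t x := by
  refine lop_congr ?_
  filter_upwards [hf.eventually (mod_cast ENat.natCast_ne_top _)] with q hq
    using dx_iterate_dt_comm k hq

theorem lop_dt (hf : ContDiffAt ℝ 2 (uncurry f) (t, x)) :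
    Lop (Dt f) t x = Dt (Lop f) t x - Dx f t x := by
  have hDt := hasDerivAt_dt (differentiableAt_dt hf)
  have hDx := hasDerivAt_dt (differentiableAt_dx hf)
  have hL : Dt (Lop f) t x = x * Dt (Dt f) t x + (1 * Dx f t x + t * Dt (Dx f) t x) :=
    ((hDt.const_mul x).add ((hasDerivAt_id t).mul hDx)).deriv
  rw [hL, Lop, dx_dt_comm hf]
  ring

theorem lop_dx (hf : ContDiffAt ℝ 2 (uncurry f) (t, x)) :
    Lop (Dx f) t x = Dx (Lop f) t x - Dt f t x := by
  have hDt := hasDerivAt_dx (differentiableAt_dt hf)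
  have hDx := hasDerivAt_dx (differentiableAt_dx hf)
  have hL : Dx (Lop f) t x = 1 * Dt f t x + x * Dx (Dt f) t x + t * Dx (Dx f) t x :=
    (((hasDerivAt_id x).mul hDt).add (hDx.const_mul t)).deriv
  rw [hL, Lop, dx_dt_comm hf]
  ring

-- At `k = 0` the truncated `k - 1` is harmless: its coefficient vanishes.
theorem lop_iterate_dx (k : ℕ) (hf : ContDiffAt ℝ (k + 1 : ℕ) (uncurry f) (t, x)) :
    Lop (Dx^[k] f) t x = Dx^[k] (Lop f) t x - k * Dt (Dx^[k - 1] f) t x := by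
  induction k generalizing t x with
  | zero => simp
  | succ k ih =>
    have ih' : uncurry (Lop (Dx^[k] f)) =ᶠ[𝓝 (t, x)]
        uncurry fun s y => Dx^[k] (Lop f) s y - k * Dt (Dx^[k - 1] f) s y := by
      filter_upwards [hf.eventually (mod_cast ENat.natCast_ne_top _)] with q hq
        using ih (hq.of_le (by norm_cast; omega))
    have hk : ContDiffAt ℝ 2 (uncurry (Dx^[k] f)) (t, x) :=
      contDiffAt_iterate contDiffAt_dx k (hf.of_le (by norm_cast; omega))
    have hk' : ContDiffAt ℝ 2 (uncurry (Dx^[k - 1] f)) (t, x) :=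
      contDiffAt_iterate contDiffAt_dx (k - 1) (hf.of_le (by norm_cast; omega))
    have hLk : ContDiffAt ℝ 1 (uncurry (Dx^[k] (Lop f))) (t, x) :=
      contDiffAt_iterate contDiffAt_dx k (contDiffAt_lop (hf.of_le (by norm_cast; omega)))
    have hderiv : Dx (Lop (Dx^[k] f)) t x
        = Dx (Dx^[k] (Lop f)) t x - k * Dx (Dt (Dx^[k - 1] f)) t x :=
      (dx_congr ih').trans ((hasDerivAt_dx (hLk.differentiableAt one_ne_zero)).sub
        ((hasDerivAt_dx (differentiableAt_dt hk')).const_mul (k : ℝ))).deriv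
    rw [iterate_succ_apply', iterate_succ_apply', lop_dx hk, hderiv, dx_dt_comm hk',
      ← iterate_succ_apply' Dx (k - 1)]
    cases k with
    | zero => simp
    | succ k => push_cast [Nat.add_sub_cancel]; ring

theorem lop_iterate_dt_iterate_dx (k l : ℕ)
    (hf : ContDiffAt ℝ (k + l + 1 : ℕ) (uncurry f) (t, x)) :
    Lop (Dt^[k] (Dx^[l] f)) t x = Dt^[k] (Dx^[l] (Lop f)) t x
      - l * Dt^[k + 1] (Dx^[l - 1] f) t x - k * Dt^[k - 1] (Dx^[l + 1] f) t x := by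
  induction k generalizing t x with
  | zero => simpa using lop_iterate_dx l (by simpa using hf)
  | succ k ih =>
    have ih' : uncurry (Lop (Dt^[k] (Dx^[l] f))) =ᶠ[𝓝 (t, x)]
        uncurry fun s y => Dt^[k] (Dx^[l] (Lop f)) s y
          - l * Dt^[k + 1] (Dx^[l - 1] f) s y - k * Dt^[k - 1] (Dx^[l + 1] f) s y := by
      filter_upwards [hf.eventually (mod_cast ENat.natCast_ne_top _)] with q hq
        using ih (hq.of_le (by norm_cast; omega))
    have hdiff (i m : ℕ) (him : i + m ≤ k + l + 1) :
        DifferentiableAt ℝ (uncurry (Dt^[i] (Dx^[m] f))) (t, x) :=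
      (contDiffAt_iterate_dt_iterate_dx i m
        (hf.of_le (by norm_cast; omega))).differentiableAt one_ne_zero
    have hdiffL : DifferentiableAt ℝ (uncurry (Dt^[k] (Dx^[l] (Lop f)))) (t, x) :=
      (contDiffAt_iterate_dt_iterate_dx k l
        (contDiffAt_lop (hf.of_le (by norm_cast; omega)))).differentiableAt one_ne_zero
    have hderiv : Dt (Lop (Dt^[k] (Dx^[l] f))) t x = Dt (Dt^[k] (Dx^[l] (Lop f))) t x
        - l * Dt (Dt^[k + 1] (Dx^[l - 1] f)) t x - k * Dt (Dt^[k - 1] (Dx^[l + 1] f)) t x :=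
      (dt_congr ih').trans (((hasDerivAt_dt hdiffL).sub
        ((hasDerivAt_dt (hdiff (k + 1) (l - 1) (by omega))).const_mul (l : ℝ))).sub
        ((hasDerivAt_dt (hdiff (k - 1) (l + 1) (by omega))).const_mul (k : ℝ))).deriv
    have hkl : ContDiffAt ℝ 2 (uncurry (Dt^[k] (Dx^[l] f))) (t, x) :=
      contDiffAt_iterate_dt_iterate_dx k l (hf.of_le (by norm_cast; omega))
    have hl : ContDiffAt ℝ (k + 1 : ℕ) (uncurry (Dx^[l] f)) (t, x) :=
      contDiffAt_iterate contDiffAt_dx l (hf.of_le (by norm_cast; omega))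
    rw [iterate_succ_apply' Dt k, lop_dt hkl, hderiv, dx_iterate_dt_comm k hl,
      ← iterate_succ_apply' Dx l, ← iterate_succ_apply' Dt, ← iterate_succ_apply' Dt,
      ← iterate_succ_apply' Dt]
    cases k with
    | zero => simp
    | succ k => push_cast [Nat.add_sub_cancel]; ring

end Commutators

section HessianIdentity

theorem sq_sub_sq_mul_dt_dt (hf : ContDiffAt ℝ 2 (uncurry f) (t, x)) :
    (x ^ 2 - t ^ 2) * Dt (Dt f) t x
      = x * Lop (Dt f) t x - t * Lop (Dx f) t x - t ^ 2 * Box f t x := by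
  simp only [Lop, Box, dx_dt_comm hf]
  ring

theorem abs_abs_sub_abs_mul_dt_dt_le (hf : ContDiffAt ℝ 2 (uncurry f) (t, x)) (hx : x ≠ 0) :
    |(|x| - |t|) * Dt (Dt f) t x|
      ≤ t ^ 2 / |x| * |Box f t x| + max |Lop (Dt f) t x| |Lop (Dx f) t x| := by
  set M := max |Lop (Dt f) t x| |Lop (Dx f) t x|
  have hsum : 0 < |x| + |t| := by positivity
  have hbox : t ^ 2 ≤ (|x| + |t|) * (t ^ 2 / |x|) :=
    calc t ^ 2 = |x| * (t ^ 2 / |x|) := by field_simp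
      _ ≤ (|x| + |t|) * (t ^ 2 / |x|) := by gcongr; exact le_add_of_nonneg_right (abs_nonneg t)
  refine le_of_mul_le_mul_left ?_ hsum
  calc (|x| + |t|) * |(|x| - |t|) * Dt (Dt f) t x|
      = |(x ^ 2 - t ^ 2) * Dt (Dt f) t x| := by
        rw [← sq_abs x, ← sq_abs t, sq_sub_sq, mul_assoc, abs_mul (|x| + |t|), abs_of_pos hsum]
    _ = |x * Lop (Dt f) t x - t * Lop (Dx f) t x - t ^ 2 * Box f t x| := by
        rw [sq_sub_sq_mul_dt_dt hf]
    _ ≤ |x| * |Lop (Dt f) t x| + |t| * |Lop (Dx f) t x| + t ^ 2 * |Box f t x| := by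
        rw [← abs_mul x, ← abs_mul t, ← abs_of_nonneg (sq_nonneg t), ← abs_mul, abs_sq]
        exact (abs_sub _ _).trans (add_le_add_left (abs_sub _ _) _)
    _ ≤ |x| * M + |t| * M + (|x| + |t|) * (t ^ 2 / |x|) * |Box f t x| := by
        gcongr
        exacts [le_max_left _ _, le_max_right _ _]
    _ = (|x| + |t|) * (t ^ 2 / |x| * |Box f t x| + M) := by ring

end HessianIdentity

section GradientSum

/-- The sum of `|∂_α ∂_t^a ∂_x^b L^j u|` at `(t, x)` over `α ∈ {t, x}`, `a + b ≤ N` and `j ≤ J`,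
the error term of the Hessian bound. The indices `a` and `b` run separately
up to `N`, and the constraint `a + b ≤ N` is imposed inside the sum. -/
noncomputable def gradSum (u : ℝ → ℝ → ℝ) (N J : ℕ) (t x : ℝ) : ℝ :=
  ∑ a ∈ Finset.range (N + 1), ∑ b ∈ Finset.range (N + 1), ∑ j ∈ Finset.range (J + 1),
    (if a + b ≤ N then
      |Dt (Dt^[a] (Dx^[b] (Lop^[j] u))) t x| + |Dx (Dt^[a] (Dx^[b] (Lop^[j] u))) t x|
    else 0)

variable {N J : ℕ}

theorem abs_dt_add_abs_dx_le_gradSum {a b j : ℕ} (hab : a + b ≤ N) (hj : j ≤ J) :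
    |Dt (Dt^[a] (Dx^[b] (Lop^[j] u))) t x| + |Dx (Dt^[a] (Dx^[b] (Lop^[j] u))) t x|
      ≤ gradSum u N J t x := by
  have hterm (a' b' j' : ℕ) : 0 ≤ if a' + b' ≤ N then
      |Dt (Dt^[a'] (Dx^[b'] (Lop^[j'] u))) t x| + |Dx (Dt^[a'] (Dx^[b'] (Lop^[j'] u))) t x|
      else 0 := by
    split_ifs <;> positivity
  have ha : a ∈ Finset.range (N + 1) := Finset.mem_range.2 (by omega)
  have hb : b ∈ Finset.range (N + 1) := Finset.mem_range.2 (by omega)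
  have hj : j ∈ Finset.range (J + 1) := Finset.mem_range.2 (by omega)
  refine le_trans ?_ (Finset.single_le_sum (fun a' _ => Finset.sum_nonneg fun b' _ =>
    Finset.sum_nonneg fun j' _ => hterm a' b' j') ha)
  refine le_trans ?_ (Finset.single_le_sum (fun b' _ =>
    Finset.sum_nonneg fun j' _ => hterm a b' j') hb)
  refine le_trans ?_ (Finset.single_le_sum (fun j' _ => hterm a b j') hj)
  rw [if_pos hab]

theorem abs_iterate_le_gradSum {k l j : ℕ} (hpos : 0 < k + l) (hkl : k + l ≤ N + 1)
    (hj : j ≤ J) : |Dt^[k] (Dx^[l] (Lop^[j] u)) t x| ≤ gradSum u N J t x := by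
  rcases k with _ | k
  · obtain ⟨l, rfl⟩ : ∃ m, l = m + 1 := ⟨l - 1, by omega⟩
    rw [iterate_succ_apply' Dx]
    exact (le_add_of_nonneg_left (abs_nonneg _)).trans
      (abs_dt_add_abs_dx_le_gradSum (a := 0) (by omega) hj)
  · rw [iterate_succ_apply' Dt]
    exact (le_add_of_nonneg_right (abs_nonneg _)).trans
      (abs_dt_add_abs_dx_le_gradSum (by omega) hj)

theorem abs_lop_iterate_le_gradSum {k l j : ℕ} (hpos : 0 < k + l) (hkl : k + l ≤ N + 1)
    (hj : j < J) (hu : ContDiffAt ℝ (k + l + j + 1 : ℕ) (uncurry u) (t, x)) :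
    |Lop (Dt^[k] (Dx^[l] (Lop^[j] u))) t x| ≤ (k + l + 1) * gradSum u N J t x := by
  have hw : ContDiffAt ℝ (k + l + 1 : ℕ) (uncurry (Lop^[j] u)) (t, x) :=
    contDiffAt_iterate contDiffAt_lop j (hu.of_le (by norm_cast; omega))
  have hmain : |Dt^[k] (Dx^[l] (Lop^[j + 1] u)) t x| ≤ gradSum u N J t x :=
    abs_iterate_le_gradSum hpos hkl hj
  have hdx : |l * Dt^[k + 1] (Dx^[l - 1] (Lop^[j] u)) t x| ≤ l * gradSum u N J t x := by
    rw [abs_mul, Nat.abs_cast]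
    rcases Nat.eq_zero_or_pos l with rfl | hl
    · simp
    · gcongr
      exact abs_iterate_le_gradSum (by omega) (by omega) hj.le
  have hdt : |k * Dt^[k - 1] (Dx^[l + 1] (Lop^[j] u)) t x| ≤ k * gradSum u N J t x := by
    rw [abs_mul, Nat.abs_cast]
    rcases Nat.eq_zero_or_pos k with rfl | hk
    · simp
    · gcongr
      exact abs_iterate_le_gradSum (by omega) (by omega) hj.le
  rw [lop_iterate_dt_iterate_dx k l hw, ← iterate_succ_apply' Lop]
  calc _ ≤ |Dt^[k] (Dx^[l] (Lop^[j + 1] u)) t x|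
        + |l * Dt^[k + 1] (Dx^[l - 1] (Lop^[j] u)) t x|
        + |k * Dt^[k - 1] (Dx^[l + 1] (Lop^[j] u)) t x| :=
        (abs_sub _ _).trans (add_le_add_left (abs_sub _ _) _)
    _ ≤ gradSum u N J t x + l * gradSum u N J t x + k * gradSum u N J t x :=
        add_le_add (add_le_add hmain hdx) hdt
    _ = (k + l + 1) * gradSum u N J t x := by ring

end GradientSum

theorem stmt11_general (a b j : ℕ) {u : ℝ → ℝ → ℝ} {t x : ℝ}
    (hu : ContDiffAt ℝ (a + b + j + 2 : ℕ) (uncurry u) (t, x)) (hx : x ≠ 0) :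
    |(|x| - |t|) * Dt (Dt (Dt^[a] (Dx^[b] (Lop^[j] u)))) t x|
      ≤ t ^ 2 / |x| * |Box (Dt^[a] (Dx^[b] (Lop^[j] u))) t x|
        + (a + b + 2) * gradSum u (a + b) (j + 1) t x := by
  have hw : ContDiffAt ℝ (a + b + 2 : ℕ) (uncurry (Lop^[j] u)) (t, x) :=
    contDiffAt_iterate contDiffAt_lop j (hu.of_le (by norm_cast; omega))
  have hv : ContDiffAt ℝ 2 (uncurry (Dt^[a] (Dx^[b] (Lop^[j] u)))) (t, x) :=
    contDiffAt_iterate_dt_iterate_dx a b (hw.of_le (by norm_cast; omega))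
  have hLt : |Lop (Dt (Dt^[a] (Dx^[b] (Lop^[j] u)))) t x|
      ≤ ((a + 1 : ℕ) + b + 1) * gradSum u (a + b) (j + 1) t x := by
    rw [← iterate_succ_apply' Dt]
    exact abs_lop_iterate_le_gradSum (by omega) (by omega) j.lt_succ_self
      (hu.of_le (by norm_cast; omega))
  have hLx : |Lop (Dx (Dt^[a] (Dx^[b] (Lop^[j] u)))) t x|
      ≤ (a + (b + 1 : ℕ) + 1) * gradSum u (a + b) (j + 1) t x := by
    rw [lop_dx_iterate_dt a (contDiffAt_iterate contDiffAt_dx b (hw.of_le (by norm_cast; omega))),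
      ← iterate_succ_apply' Dx]
    exact abs_lop_iterate_le_gradSum (by omega) (by omega) j.lt_succ_self
      (hu.of_le (by norm_cast; omega))
  have hmax : max |Lop (Dt (Dt^[a] (Dx^[b] (Lop^[j] u)))) t x|
      |Lop (Dx (Dt^[a] (Dx^[b] (Lop^[j] u)))) t x|
        ≤ (a + b + 2) * gradSum u (a + b) (j + 1) t x :=
    max_le (hLt.trans_eq (by push_cast; ring)) (hLx.trans_eq (by push_cast; ring))
  exact (abs_abs_sub_abs_mul_dt_dt_le hv hx).trans (add_le_add_right hmax _)

theorem pos_prod_ne_zero_mem_nhds (ht : 0 < t) (hx : x ≠ 0) :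
    {p : ℝ × ℝ | 0 < p.1 ∧ p.2 ≠ 0} ∈ 𝓝 (t, x) :=
  prod_mem_nhds (lt_mem_nhds ht) (isOpen_ne.mem_nhds hx)

/-- Hessian bound
`|(|x|−t)·∂_t∂_t(∂_t^a ∂_x^b L^j u)| ≤ (t²/|x|)|□(∂_t^a ∂_x^b L^j u)| + C Σ |∂_α ∂_t^{a′}∂_x^{b′}L^{j′} u|`
on `{t > 0, x ≠ 0}`, the sum running over `α ∈ {t,x}`, `a′+b′ ≤ a+b` and `j′ ≤ j+1`. -/
theorem stmt11 (a b j : ℕ) :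
    ∃ C > (0:ℝ), ∀ u : ℝ → ℝ → ℝ,
      ContDiffOn ℝ (⊤ : ℕ∞) (fun p : ℝ × ℝ => u p.1 p.2) {p : ℝ × ℝ | 0 < p.1 ∧ p.2 ≠ 0} →
      ∀ t x : ℝ, 0 < t → x ≠ 0 →
        |(|x| - t) * Dt (Dt (Dt^[a] (Dx^[b] (Lop^[j] u)))) t x| ≤
          (t^2/|x|) * |Box (Dt^[a] (Dx^[b] (Lop^[j] u))) t x|
          + C * ∑ a' ∈ Finset.range (a+b+1), ∑ b' ∈ Finset.range (a+b+1),
              ∑ j' ∈ Finset.range (j+2),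
                (if a' + b' ≤ a + b then
                  |Dt (Dt^[a'] (Dx^[b'] (Lop^[j'] u))) t x| +
                  |Dx (Dt^[a'] (Dx^[b'] (Lop^[j'] u))) t x|
                else 0) := by
  refine ⟨a + b + 2, by positivity, fun u hu t x ht hx => ?_⟩
  simpa only [abs_of_pos ht, gradSum] using stmt11_general a b j
    (contDiffAt_infty.1 (hu.contDiffAt (pos_prod_ne_zero_mem_nhds ht hx)) _) hx
end

section
/- There exists a constant C > 0 such that ρ(x)² ≤ C ∫_{−∞}^x ρ(y) dy for all x ∈ ℝ. Consequently, there is a constant C′ > 0 such that for all s ≥ 2 and all r ∈ [(s²−1)/2, (s²+1)/2], one has |ξ_s′(r)| ≤ C′ (1 − ξ_s(r))^{1/2}. -/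
open MeasureTheory

/-- The bump function `ρ(x) = exp(4/(4x²−1))` for `|x| < 1/2`, and `0` otherwise. -/
noncomputable def rho (x : ℝ) : ℝ := if |x| < 1/2 then Real.exp (4 / (4*x^2 - 1)) else 0

/-- The smooth cutoff `χ(x) = (∫_{−∞}^{x+1/2} ρ)/(∫_ℝ ρ)`. -/
noncomputable def chi (x : ℝ) : ℝ := (∫ y in Set.Iic (x + 1/2), rho y) / ∫ y, rho y

/-- `ξ_s(r) = 1 − χ(r − (s²−1)/2)`. -/
noncomputable def xi (s r : ℝ) : ℝ := 1 - chi (r - (s^2 - 1)/2)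

/-!
If `f ≥ 0` is integrable near `-∞` and `f' ≤ M`, then `(f²)' = 2 f f' ≤ 2 M f`. Integrating from `a`
to `x` gives `f(x)² - f(a)² ≤ 2 M ∫_a^x f`, and integrability lets `a → -∞` along points where
`f(a)` is arbitrarily small, so `f(x)² ≤ 2 M ∫_{-∞}^x f`. For `f = ρ` the right-hand side is a
multiple of `χ(x - 1/2)`, and `ρ` is a multiple of the derivative of this shift of `χ`.
-/

open Set Filter Topology

section IntegralIic

theorem frequently_atBot_lt_of_integrableOn_Iic {f : ℝ → ℝ} {b ε : ℝ}
    (hf : IntegrableOn f (Iic b)) (hε : 0 < ε) : ∃ᶠ a in atBot, f a < ε := by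
  intro hge
  obtain ⟨c, hc⟩ := eventually_atBot.1 hge
  have hconst : IntegrableOn (fun _ => ε) (Iic (min b c)) := by
    refine (hf.mono_set (Iic_subset_Iic.2 (min_le_left b c))).mono'
      aestronglyMeasurable_const ?_
    filter_upwards [ae_restrict_mem measurableSet_Iic] with a ha
    rw [Real.norm_of_nonneg hε.le]
    exact not_lt.1 (hc a (ha.trans (min_le_right b c)))
  simp [integrableOn_const_iff, hε.ne'] at hconst

theorem hasDerivAt_integral_Iic {E : Type*} [NormedAddCommGroup E] [NormedSpace ℝ E]
    [CompleteSpace E] {f : ℝ → E} {x : ℝ} (hf : Integrable f) (hx : ContinuousAt f x) :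
    HasDerivAt (fun b => ∫ y in Iic b, f y) (f x) x := by
  have hsplit : (fun b => ∫ y in Iic b, f y) =
      fun b => (∫ y in Iic x, f y) + ∫ y in x..b, f y := by
    funext b
    rw [← intervalIntegral.integral_Iic_sub_Iic hf.integrableOn hf.integrableOn,
      add_sub_cancel]
  rw [hsplit]
  exact (intervalIntegral.integral_hasDerivAt_right hf.intervalIntegrable
    hf.aestronglyMeasurable.stronglyMeasurableAtFilter hx).const_add _

variable {f : ℝ → ℝ} {M : ℝ}

theorem sq_sub_sq_le_two_mul_integral (hf : Differentiable ℝ f) (hf₀ : ∀ x, 0 ≤ f x)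
    (hM : ∀ x, deriv f x ≤ M) {a b : ℝ} (hab : a ≤ b) :
    f b ^ 2 - f a ^ 2 ≤ 2 * M * ∫ y in a..b, f y := by
  have hderiv (x : ℝ) : HasDerivAt (fun y => f y ^ 2) (2 * f x * deriv f x) x := by
    simpa using (hf x).hasDerivAt.fun_pow 2
  have hbound (x : ℝ) : 2 * f x * deriv f x ≤ 2 * M * f x := by
    nlinarith [mul_le_mul_of_nonneg_left (hM x) (hf₀ x)]
  rw [← intervalIntegral.integral_const_mul]
  exact intervalIntegral.sub_le_integral_of_hasDeriv_right_of_le hab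
    (hf.continuous.pow 2).continuousOn (fun x _ => (hderiv x).hasDerivWithinAt)
    (hf.continuous.const_mul _).integrableOn_Icc (fun x _ => hbound x)

theorem sq_le_two_mul_integral_Iic (hf : Differentiable ℝ f) (hf₀ : ∀ x, 0 ≤ f x)
    (hM : ∀ x, deriv f x ≤ M) {x : ℝ} (hfi : IntegrableOn f (Iic x)) :
    f x ^ 2 ≤ 2 * M * ∫ y in Iic x, f y := by
  refine le_of_forall_pos_le_add fun ε hε => sub_le_iff_le_add.1 ?_
  have hlim : Tendsto (fun a => 2 * M * ∫ y in a..x, f y) atBot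
      (𝓝 (2 * M * ∫ y in Iic x, f y)) :=
    (intervalIntegral_tendsto_integral_Iic x hfi tendsto_id).const_mul _
  have hsmall : ∃ᶠ a in atBot, f a < √ε :=
    frequently_atBot_lt_of_integrableOn_Iic hfi (Real.sqrt_pos.2 hε)
  refine ge_of_tendsto_of_frequently hlim
    ((hsmall.and_eventually (eventually_le_atBot x)).mono fun a ⟨ha, hax⟩ => ?_)
  have hsq : f a ^ 2 < ε := (Real.lt_sqrt (hf₀ a)).1 ha
  linarith [sq_sub_sq_le_two_mul_integral hf hf₀ hM hax]

end IntegralIic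

section Bump

theorem rho_eq_expNegInvGlue (x : ℝ) : rho x = expNegInvGlue ((1 - 4 * x ^ 2) / 4) := by
  have hx : |x| < 1 / 2 ↔ ¬(1 - 4 * x ^ 2) / 4 ≤ 0 := by
    rw [not_le, ← abs_of_pos (one_half_pos (α := ℝ)), ← sq_lt_sq]
    constructor <;> intro h <;> linarith
  have hexp : 4 / (4 * x ^ 2 - 1) = -((1 - 4 * x ^ 2) / 4)⁻¹ := by
    rw [inv_div, ← div_neg, neg_sub]
  simp only [rho, expNegInvGlue, hx, ite_not, hexp]

theorem contDiff_rho {n : ℕ∞} : ContDiff ℝ n rho := by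
  rw [funext rho_eq_expNegInvGlue]
  exact expNegInvGlue.contDiff.comp (by fun_prop)

theorem rho_nonneg (x : ℝ) : 0 ≤ rho x :=
  rho_eq_expNegInvGlue x ▸ expNegInvGlue.nonneg _

theorem support_rho : Function.support rho = Ioo (-(1 / 2)) (1 / 2) := by
  ext x
  simp [rho, abs_lt, Real.exp_ne_zero]

theorem hasCompactSupport_rho : HasCompactSupport rho :=
  .of_support_subset_isCompact isCompact_Icc (support_rho.trans_subset Ioo_subset_Icc_self)

theorem continuous_rho : Continuous rho :=
  (contDiff_rho (n := 0)).continuous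

theorem integrable_rho : Integrable rho :=
  continuous_rho.integrable_of_hasCompactSupport hasCompactSupport_rho

theorem integral_rho_pos : 0 < ∫ y, rho y := by
  simp [integral_pos_iff_support_of_nonneg rho_nonneg integrable_rho, support_rho]

theorem exists_deriv_rho_le : ∃ M > 0, ∀ x, deriv rho x ≤ M := by
  have hcont : Continuous (deriv rho) := (contDiff_rho (n := 1)).continuous_deriv le_rfl
  obtain ⟨M, hM⟩ := hcont.bounded_above_of_compact_support hasCompactSupport_rho.deriv
  exact ⟨max M 1, by positivity,
    fun x => (Real.le_norm_self _).trans ((hM x).trans (le_max_left M 1))⟩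

theorem exists_rho_sq_le_mul_integral_Iic :
    ∃ C > 0, ∀ x, rho x ^ 2 ≤ C * ∫ y in Iic x, rho y := by
  obtain ⟨M, hM₀, hM⟩ := exists_deriv_rho_le
  have hdiff : Differentiable ℝ rho := (contDiff_rho (n := 1)).differentiable one_ne_zero
  exact ⟨2 * M, by positivity, fun x =>
    sq_le_two_mul_integral_Iic hdiff rho_nonneg hM integrable_rho.integrableOn⟩

end Bump

section Cutoff

theorem deriv_chi (x : ℝ) : deriv chi x = rho (x + 1 / 2) / ∫ y, rho y :=
  (((hasDerivAt_integral_Iic integrable_rho continuous_rho.continuousAt).comp_add_const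
    x (1 / 2)).div_const _).deriv

theorem exists_abs_deriv_chi_le_mul_sqrt : ∃ C > 0, ∀ x, |deriv chi x| ≤ C * √(chi x) := by
  obtain ⟨C, hC, hrho⟩ := exists_rho_sq_le_mul_integral_Iic
  have hI := integral_rho_pos
  refine ⟨√(C / ∫ y, rho y), by positivity, fun x => ?_⟩
  rw [← Real.sqrt_mul (by positivity)]
  refine Real.abs_le_sqrt ?_
  calc deriv chi x ^ 2 = rho (x + 1 / 2) ^ 2 / (∫ y, rho y) ^ 2 := by rw [deriv_chi, div_pow]
    _ ≤ (C * ∫ y in Iic (x + 1 / 2), rho y) / (∫ y, rho y) ^ 2 := by gcongr; exact hrho _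
    _ = C / (∫ y, rho y) * chi x := by rw [chi, div_mul_div_comm, ← sq]

theorem one_sub_xi (s r : ℝ) : 1 - xi s r = chi (r - (s ^ 2 - 1) / 2) :=
  sub_sub_cancel _ _

theorem deriv_xi (s r : ℝ) : deriv (xi s) r = -deriv chi (r - (s ^ 2 - 1) / 2) := by
  unfold xi
  rw [deriv_const_sub, deriv_comp_sub_const]

end Cutoff

theorem stmt12_general :
    (∃ C > 0, ∀ x : ℝ, rho x ^ 2 ≤ C * ∫ y in Iic x, rho y) ∧
    ∃ C' > 0, ∀ s r : ℝ, |deriv (xi s) r| ≤ C' * √(1 - xi s r) := by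
  obtain ⟨C', hC', hchi⟩ := exists_abs_deriv_chi_le_mul_sqrt
  refine ⟨exists_rho_sq_le_mul_integral_Iic, C', hC', fun s r => ?_⟩
  rw [deriv_xi, abs_neg, one_sub_xi]
  exact hchi _

/-- `ρ(x)² ≤ C ∫_{−∞}^x ρ` for all `x`, and consequently
`|ξ_s′(r)| ≤ C′(1 − ξ_s(r))^{1/2}` for `s ≥ 2` and `(s²−1)/2 ≤ r ≤ (s²+1)/2`. -/
theorem stmt12 :
    (∃ C > (0:ℝ), ∀ x : ℝ, (rho x)^2 ≤ C * ∫ y in Set.Iic x, rho y) ∧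
    (∃ C' > (0:ℝ), ∀ s : ℝ, 2 ≤ s → ∀ r : ℝ, (s^2 - 1)/2 ≤ r → r ≤ (s^2 + 1)/2 →
      |deriv (xi s) r| ≤ C' * Real.sqrt (1 - xi s r)) := by
  obtain ⟨hrho, C, hC, hxi⟩ := stmt12_general
  exact ⟨hrho, C, hC, fun s _ r _ _ => hxi s r⟩
end

section
/- Let T^{αβ} (α, β ∈ {0,1}) be real constants satisfying the null condition T^{00} + T^{01} + T^{10} + T^{11} = 0 and T^{00} − T^{01} − T^{10} + T^{11} = 0 (i.e. the associated quadratic form vanishes on the null vectors (1,1) and (1,−1)). Define the semi-hyperboloidal component T̄^{00}(t,x) := T^{00} − (x/t)(T^{01} + T^{10}) + (x/t)² T^{11} on {t > 0}. Then T̄^{00}(t,x) = ((t² − x²)/t²) T^{00}; moreover, there exist constants C(a,b,j) such that for all (t,x) in the cone {(t,x) : |x| ≤ t − 1}, |∂_t^a ∂_x^b L^j T̄^{00}(t,x)| ≤ C(0,0,j) (t² − x²)/t² when a + b = 0, and |∂_t^a ∂_x^b L^j T̄^{00}(t,x)| ≤ C(a,b,j) t^{−(a+b)} when a + b ≥ 1.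 -/
open MeasureTheory

/-!
A function `t ^ d * P (x / t)` with polynomial profile `P` is homogeneous of degree `d`. The
derivatives `∂_t` and `∂_x` lower the degree by one and keep the profile polynomial, so a bound on
`P` over `[-1, 1]` gives the decay rate `t ^ d` in the light cone. The boost `L` preserves the
degree and acts on profiles by `P ↦ d X P + (1 - X²) P'`, which maps the ideal `(1 - X²)` into
itself (a reflection of `L (t² - x²) = 0`). The null condition says that the profile of `T̄^{00}`,
of degree `0`, vanishes at `±1`, i.e. lies in that ideal, and the factor `1 - (x / t)²` therefore
survives every application of `L`.
-/

/-- The function `u` is homogeneous of degree `d` on `{t > 0}` with polynomial profile `P`, that is,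
`u(t,x) = t^d P(x/t)` there. This class of functions contains the semi-hyperboloidal components
of constant tensors and is stable under `∂_t`, `∂_x` and `L`; nothing is required for `t ≤ 0`. -/
def HasProfile (d : ℤ) (P : Polynomial ℝ) (u : ℝ → ℝ → ℝ) : Prop :=
  ∀ ⦃t x : ℝ⦄, 0 < t → u t x = t ^ d * P.eval (x / t)

namespace HasProfile

open Polynomial

variable {d : ℤ} {P : ℝ[X]} {u : ℝ → ℝ → ℝ}

theorem dx (h : HasProfile d P u) : HasProfile (d - 1) (derivative P) (Dx u) := by
  intro t x ht
  have hu : (fun y ↦ u t y) = fun y ↦ t ^ d * P.eval (y / t) := funext fun _ ↦ h ht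
  have hdiv : HasDerivAt (fun y ↦ y / t) (1 / t) x := (hasDerivAt_id' x).div_const t
  have hP : HasDerivAt (fun y ↦ P.eval (y / t)) ((derivative P).eval (x / t) * (1 / t)) x :=
    HasDerivAt.comp (h₂ := (P.eval ·)) x (P.hasDerivAt (x / t)) hdiv
  rw [Dx, hu, (hP.const_mul (t ^ d)).deriv, zpow_sub_one₀ ht.ne']
  ring

theorem dt (h : HasProfile d P u) :
    HasProfile (d - 1) (C (d : ℝ) * P - X * derivative P) (Dt u) := by
  intro t x ht
  have hu : (fun τ ↦ u τ x) =ᶠ[nhds t] fun τ ↦ τ ^ d * P.eval (x / τ) := by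
    filter_upwards [lt_mem_nhds ht] with τ hτ using h hτ
  have hinv : HasDerivAt (fun τ ↦ x / τ) (x * -(t ^ 2)⁻¹) t :=
    (hasDerivAt_inv ht.ne').const_mul x
  have hP : HasDerivAt (fun τ ↦ P.eval (x / τ))
      ((derivative P).eval (x / t) * (x * -(t ^ 2)⁻¹)) t :=
    HasDerivAt.comp (h₂ := (P.eval ·)) t (P.hasDerivAt (x / t)) hinv
  rw [Dt, hu.deriv_eq, ((hasDerivAt_zpow d t (.inl ht.ne')).fun_mul hP).deriv]
  simp only [eval_sub, eval_mul, eval_C, eval_X, zpow_sub_one₀ ht.ne']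
  field_simp
  ring

theorem lop (h : HasProfile d P u) :
    HasProfile d (C (d : ℝ) * X * P + (1 - X ^ 2) * derivative P) (Lop u) := by
  intro t x ht
  rw [Lop, h.dt ht, h.dx ht]
  simp only [eval_add, eval_sub, eval_mul, eval_pow, eval_C, eval_X, eval_one,
    zpow_sub_one₀ ht.ne']
  field_simp
  ring

theorem iterate_dx (h : HasProfile d P u) (b : ℕ) :
    HasProfile (d - b) (derivative^[b] P) (Dx^[b] u) := by
  induction b with
  | zero => simpa using h
  | succ b ih =>
    simpa only [Function.iterate_succ_apply', Nat.cast_succ, sub_add_eq_sub_sub] using ih.dx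

theorem exists_iterate_dt (h : HasProfile d P u) (a : ℕ) :
    ∃ Q, HasProfile (d - a) Q (Dt^[a] u) := by
  induction a with
  | zero => exact ⟨P, by simpa using h⟩
  | succ a ih =>
    obtain ⟨Q, hQ⟩ := ih
    simp only [Function.iterate_succ_apply', Nat.cast_succ, sub_add_eq_sub_sub]
    exact ⟨_, hQ.dt⟩

theorem exists_iterate_lop (h : HasProfile d P u) (j : ℕ) :
    ∃ Q, HasProfile d Q (Lop^[j] u) := by
  induction j with
  | zero => exact ⟨P, h⟩
  | succ j ih =>
    obtain ⟨Q, hQ⟩ := ih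
    rw [Function.iterate_succ_apply']
    exact ⟨_, hQ.lop⟩

theorem exists_iterate_lop_of_dvd (h : HasProfile d P u) (hP : 1 - X ^ 2 ∣ P) (j : ℕ) :
    ∃ Q, 1 - X ^ 2 ∣ Q ∧ HasProfile d Q (Lop^[j] u) := by
  induction j with
  | zero => exact ⟨P, hP, h⟩
  | succ j ih =>
    obtain ⟨Q, hdvd, hQ⟩ := ih
    rw [Function.iterate_succ_apply']
    exact ⟨_, dvd_add (hdvd.mul_left _) (dvd_mul_right _ _), hQ.lop⟩

theorem exists_abs_le (h : HasProfile d P u) :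
    ∃ C > 0, ∀ t x : ℝ, 0 < t → |x| ≤ t → |u t x| ≤ C * t ^ d := by
  obtain ⟨C, hC⟩ := (isCompact_Icc (a := (-1 : ℝ)) (b := 1)).exists_bound_of_continuousOn
    P.continuousOn
  refine ⟨max C 1, by positivity, fun t x ht hx ↦ ?_⟩
  have hmem : x / t ∈ Set.Icc (-1) 1 := by
    rwa [Set.mem_Icc, ← abs_le, abs_div, abs_of_pos ht, div_le_one ht]
  calc |u t x| = |P.eval (x / t)| * t ^ d := by
        rw [h ht, abs_mul, abs_of_pos (zpow_pos ht d), mul_comm]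
    _ ≤ max C 1 * t ^ d := by
        gcongr
        exact (hC _ hmem).trans (le_max_left C 1)

theorem exists_abs_le_of_dvd (h : HasProfile d P u) (hP : 1 - X ^ 2 ∣ P) :
    ∃ C > 0, ∀ t x : ℝ, 0 < t → |x| ≤ t →
      |u t x| ≤ C * t ^ d * ((t ^ 2 - x ^ 2) / t ^ 2) := by
  obtain ⟨Q, rfl⟩ := hP
  have hv : HasProfile d Q fun t x ↦ t ^ d * Q.eval (x / t) := fun _ _ _ ↦ rfl
  obtain ⟨C, hC, hbound⟩ := hv.exists_abs_le
  refine ⟨C, hC, fun t x ht hx ↦ ?_⟩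
  have hcone : 0 ≤ (t ^ 2 - x ^ 2) / t ^ 2 :=
    div_nonneg (sub_nonneg.2 (sq_le_sq.2 (hx.trans (le_abs_self t)))) (sq_nonneg t)
  have hfactor : u t x = t ^ d * Q.eval (x / t) * ((t ^ 2 - x ^ 2) / t ^ 2) := by
    rw [h ht]
    simp only [eval_mul, eval_sub, eval_one, eval_pow, eval_X]
    field_simp
  rw [hfactor, abs_mul, abs_of_nonneg hcone]
  exact mul_le_mul_of_nonneg_right (hbound t x ht hx) hcone

theorem exists_abs_iterate_lop_le (h : HasProfile d P u) (hP : 1 - X ^ 2 ∣ P) (j : ℕ) :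
    ∃ C > 0, ∀ t x : ℝ, 0 < t → |x| ≤ t →
      |Lop^[j] u t x| ≤ C * t ^ d * ((t ^ 2 - x ^ 2) / t ^ 2) :=
  let ⟨_, hdvd, hQ⟩ := h.exists_iterate_lop_of_dvd hP j
  hQ.exists_abs_le_of_dvd hdvd

theorem exists_abs_iterate_dt_dx_lop_le (h : HasProfile d P u) (a b j : ℕ) :
    ∃ C > 0, ∀ t x : ℝ, 0 < t → |x| ≤ t →
      |Dt^[a] (Dx^[b] (Lop^[j] u)) t x| ≤ C * t ^ (d - (a + b)) := by
  obtain ⟨Q, hQ⟩ := h.exists_iterate_lop j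
  obtain ⟨R, hR⟩ := (hQ.iterate_dx b).exists_iterate_dt a
  rw [← sub_sub, sub_right_comm]
  exact hR.exists_abs_le

end HasProfile

/-- The component `T̄^{00}` of the constant tensor `T^{αβ} ∂_α ⊗ ∂_β` in the semi-hyperboloidal
frame, as a function of `(t, x)`; it is meaningful only for `t ≠ 0`, as `x / 0 = 0`. -/
noncomputable def semiHyperboloidal₀₀ (T00 T01 T10 T11 : ℝ) : ℝ → ℝ → ℝ :=
  fun t x ↦ T00 - (x / t) * (T01 + T10) + (x / t) ^ 2 * T11

section SemiHyperboloidal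

open Polynomial

variable (T00 T01 T10 T11 : ℝ)

theorem hasProfile_semiHyperboloidal₀₀ :
    HasProfile 0 (C T00 - X * C (T01 + T10) + X ^ 2 * C T11)
      (semiHyperboloidal₀₀ T00 T01 T10 T11) := by
  intro t x _
  simp only [semiHyperboloidal₀₀, eval_add, eval_sub, eval_mul, eval_pow, eval_C, eval_X,
    zpow_zero, one_mul]

variable {T00 T01 T10 T11}

theorem semiHyperboloidal_profile_eq_of_null (h1 : T00 + T01 + T10 + T11 = 0)
    (h2 : T00 - T01 - T10 + T11 = 0) :
    C T00 - X * C (T01 + T10) + X ^ 2 * C T11 = (1 - X ^ 2) * C T00 := by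
  have hcross : T01 + T10 = 0 := by linarith
  have hdiag : T11 = -T00 := by linarith
  rw [hcross, hdiag, C_0, C_neg]
  ring

theorem semiHyperboloidal₀₀_eq_of_null (h1 : T00 + T01 + T10 + T11 = 0)
    (h2 : T00 - T01 - T10 + T11 = 0) {t : ℝ} (ht : 0 < t) (x : ℝ) :
    semiHyperboloidal₀₀ T00 T01 T10 T11 t x = ((t ^ 2 - x ^ 2) / t ^ 2) * T00 := by
  rw [hasProfile_semiHyperboloidal₀₀ T00 T01 T10 T11 ht, semiHyperboloidal_profile_eq_of_null h1 h2]
  simp only [eval_mul, eval_sub, eval_one, eval_pow, eval_X, eval_C, zpow_zero, one_mul]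
  field_simp

end SemiHyperboloidal

theorem exists_bound_of_abs_le_sub_one {f g : ℝ → ℝ → ℝ}
    (h : ∃ C > 0, ∀ t x : ℝ, 0 < t → |x| ≤ t → f t x ≤ C * g t x) :
    ∃ C > 0, ∀ t x : ℝ, |x| ≤ t - 1 → f t x ≤ C * g t x := by
  obtain ⟨C, hC, hle⟩ := h
  refine ⟨C, hC, fun t x hx ↦ hle t x ?_ ?_⟩ <;> linarith [abs_nonneg x]

theorem stmt13_general (T00 T01 T10 T11 : ℝ)
    (h1 : T00 + T01 + T10 + T11 = 0) (h2 : T00 - T01 - T10 + T11 = 0) :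
    (∀ t x : ℝ, 0 < t →
      semiHyperboloidal₀₀ T00 T01 T10 T11 t x = ((t ^ 2 - x ^ 2) / t ^ 2) * T00) ∧
    (∀ j : ℕ, ∃ C > (0 : ℝ), ∀ t x : ℝ, 0 < t → |x| ≤ t →
      |Lop^[j] (semiHyperboloidal₀₀ T00 T01 T10 T11) t x| ≤ C * ((t ^ 2 - x ^ 2) / t ^ 2)) ∧
    (∀ a b j : ℕ, ∃ C > (0 : ℝ), ∀ t x : ℝ, 0 < t → |x| ≤ t →
      |Dt^[a] (Dx^[b] (Lop^[j] (semiHyperboloidal₀₀ T00 T01 T10 T11))) t x| ≤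
        C * t ^ (-((a : ℤ) + (b : ℤ)))) := by
  have hT := hasProfile_semiHyperboloidal₀₀ T00 T01 T10 T11
  refine ⟨fun t x ht ↦ semiHyperboloidal₀₀_eq_of_null h1 h2 ht x, fun j ↦ ?_,
    fun a b j ↦ ?_⟩
  · simpa only [zpow_zero, mul_one] using
      hT.exists_abs_iterate_lop_le ⟨_, semiHyperboloidal_profile_eq_of_null h1 h2⟩ j
  · simpa only [zero_sub] using hT.exists_abs_iterate_dt_dx_lop_le a b j

/-- for a constant 2-tensor `T^{αβ}` satisfying the null condition, the
semi-hyperboloidal component `T̄^{00}(t,x) = T^{00} − (x/t)(T^{01}+T^{10}) + (x/t)²T^{11}`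
equals `((t²−x²)/t²)T^{00}` on `{t > 0}`, and inside the cone `{|x| ≤ t−1}` its derivatives
satisfy `|L^j T̄^{00}| ≤ C(t²−x²)/t²` and `|∂_t^a ∂_x^b L^j T̄^{00}| ≤ C t^{−(a+b)}` for
`a+b ≥ 1`. -/
theorem stmt13 (T00 T01 T10 T11 : ℝ)
    (h1 : T00 + T01 + T10 + T11 = 0) (h2 : T00 - T01 - T10 + T11 = 0) :
    (∀ t x : ℝ, 0 < t →
      T00 - (x/t) * (T01 + T10) + (x/t)^2 * T11 = ((t^2 - x^2)/t^2) * T00) ∧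
    (∀ j : ℕ, ∃ C > (0:ℝ), ∀ t x : ℝ, |x| ≤ t - 1 →
      |(Lop^[j] (fun t x => T00 - (x/t) * (T01 + T10) + (x/t)^2 * T11)) t x| ≤
        C * ((t^2 - x^2)/t^2)) ∧
    (∀ a b j : ℕ, 1 ≤ a + b → ∃ C > (0:ℝ), ∀ t x : ℝ, |x| ≤ t - 1 →
      |(Dt^[a] (Dx^[b] (Lop^[j]
          (fun t x => T00 - (x/t) * (T01 + T10) + (x/t)^2 * T11)))) t x| ≤
        C * t ^ (-((a:ℤ) + (b:ℤ)))) := by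
  obtain ⟨hEq, hBoost, hDeriv⟩ := stmt13_general T00 T01 T10 T11 h1 h2
  exact ⟨hEq, fun j ↦ exists_bound_of_abs_le_sub_one (hBoost j),
    fun a b j _ ↦ exists_bound_of_abs_le_sub_one (hDeriv a b j)⟩
end
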